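/- arXiv:1508.01184 — 14 statements merged into one kernel-verified Lean document; each statement's English description precedes it below -/
import Mathlib

section
/- Suppose p* ∈ P satisfies: (a) V(p;x) ≤ V(p*;x) for every p < p* with x ∈ closure(G_p); and (b) V(p₁;x) ≥ V(p₂;x) whenever p* ≤ p₁ < p₂ and x ∈ G_{p₂}. Then V(p*;x) ≥ V(p;x) for all p ∈ P, i.e., p* solves the variational problem sup_{p∈P} V(p;x) for the fixed initial point x. -/
open Set

/-- Theorem 1(ii): sufficient conditions for optimality in the variational problem
over a monotone, thick one-parametric family of open regions. -/
theorem stmt_1 {n : ℕ} (hn : 1 ≤ n) (D : Set (Fin n → ℝ)) (P : Set ℝ)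
    (G : ℝ → Set (Fin n → ℝ))
    (hGopen : ∀ p ∈ P, IsOpen (G p))
    (hmono : ∀ p₁ ∈ P, ∀ p₂ ∈ P, p₁ < p₂ → G p₁ ⊆ G p₂)
    (hthick : ∀ y ∈ D, ∃! q : ℝ, q ∈ P ∧ y ∈ frontier (G q))
    (g : (Fin n → ℝ) → ℝ) (V : ℝ → (Fin n → ℝ) → ℝ)
    (hVout : ∀ p ∈ P, ∀ y ∈ D, y ∉ G p → V p y = g y)
    (x : Fin n → ℝ) (hx : x ∈ D)
    (pstar : ℝ) (hpstar : pstar ∈ P)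
    (ha : ∀ p ∈ P, p < pstar → x ∈ closure (G p) → V p x ≤ V pstar x)
    (hb : ∀ p₁ ∈ P, ∀ p₂ ∈ P, pstar ≤ p₁ → p₁ < p₂ → x ∈ G p₂ → V p₂ x ≤ V p₁ x) :
    ∀ p ∈ P, V p x ≤ V pstar x := by
  intro p hp
  rcases lt_trichotomy p pstar with h | h | h
  · by_cases hc : x ∈ closure (G p)
    · exact ha p hp h hc
    · rw [hVout p hp x hx (fun hm => hc (subset_closure hm))]
      by_cases hs : x ∈ G pstar
      · obtain ⟨q, ⟨hq, hf⟩, -⟩ := hthick x hx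
        have hnq : x ∉ G q := by
          rw [(hGopen q hq).frontier_eq] at hf
          exact hf.2
        have hlt : q < pstar := by
          rcases lt_trichotomy q pstar with h1 | h1 | h1
          · exact h1
          · exact absurd (h1 ▸ hs) hnq
          · exact absurd (hmono pstar hpstar q hq h1 hs) hnq
        rw [← hVout q hq x hx hnq]
        exact ha q hq hlt (frontier_subset_closure hf)
      · rw [hVout pstar hpstar x hx hs]
  · rw [h]
  · by_cases hc : x ∈ G p
    · exact hb pstar hpstar p hp le_rfl h hc
    · rw [hVout p hp x hx hc,
        hVout pstar hpstar x hx (fun hm => hc (hmono pstar hpstar p hp h hm))]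
end

section
/- Assume g(x₀) > 0 for some x₀ ∈ I. A threshold p* ∈ I is optimal over the class of threshold stopping times (that is, V(p*;x) ≥ V(p;x) for all p, x ∈ I) if and only if the following two conditions hold: (i) h(p) ≤ h(p*) for every p ∈ I with p < p*; and (ii) h is non-increasing on I ∩ [p*, ∞), i.e., h(p₂) ≤ h(p₁) whenever p* ≤ p₁ ≤ p₂, p₁, p₂ ∈ I. -/
open Set

/-- Theorem 2: necessary and sufficient conditions for optimality of an
upper-threshold stopping time (the class of `l`-intervals). -/
theorem stmt_2 (I : Set ℝ) (hIopen : IsOpen I) (hIconn : I.OrdConnected)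
    (hIne : I.Nonempty)
    (g ψ : ℝ → ℝ) (hψpos : ∀ x ∈ I, 0 < ψ x) (hψmono : StrictMonoOn ψ I)
    (V : ℝ → ℝ → ℝ)
    (hV : ∀ p ∈ I, ∀ x ∈ I, V p x = if x < p then (g p / ψ p) * ψ x else g x)
    (hgpos : ∃ x₀ ∈ I, 0 < g x₀)
    (pstar : ℝ) (hpstar : pstar ∈ I) :
    (∀ p ∈ I, ∀ x ∈ I, V p x ≤ V pstar x) ↔
      ((∀ p ∈ I, p < pstar → g p / ψ p ≤ g pstar / ψ pstar) ∧
       (∀ p₁ ∈ I, ∀ p₂ ∈ I, pstar ≤ p₁ → p₁ ≤ p₂ → g p₂ / ψ p₂ ≤ g p₁ / ψ p₁)) := by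
  have hg : ∀ x ∈ I, g x = g x / ψ x * ψ x := fun x hx =>
    (div_mul_cancel₀ _ (hψpos x hx).ne').symm
  constructor
  · intro h
    refine ⟨fun p hp hlt => ?_, fun p₁ h₁ p₂ h₂ hs hle => ?_⟩
    · have := h p hp p hp
      rw [hV p hp p hp, hV pstar hpstar p hp, if_neg (lt_irrefl p), if_pos hlt] at this
      rwa [div_le_iff₀ (hψpos p hp)]
    · rcases hle.eq_or_lt with rfl | hlt
      · exact le_rfl
      · have := h p₂ h₂ p₁ h₁
        rw [hV p₂ h₂ p₁ h₁, hV pstar hpstar p₁ h₁, if_pos hlt, if_neg (not_lt.2 hs)] at this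
        rwa [le_div_iff₀ (hψpos p₁ h₁)]
  · rintro ⟨h1, h2⟩ p hp x hx
    rw [hV p hp x hx, hV pstar hpstar x hx]
    have hpos := (hψpos x hx).le
    split_ifs with ha hb hb
    · refine mul_le_mul_of_nonneg_right ?_ hpos
      rcases lt_or_ge p pstar with hc | hc
      · exact h1 p hp hc
      · exact h2 pstar hpstar p hp le_rfl hc
    · rw [hg x hx]
      exact mul_le_mul_of_nonneg_right (h2 x hx p hp (not_lt.1 hb) ha.le) hpos
    · rw [hg x hx]
      exact mul_le_mul_of_nonneg_right (h1 x hx hb) hpos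
    · exact le_rfl
end

section
/- Let p* ∈ I be optimal over the class of threshold stopping times, suppose ψ is differentiable at p*, and suppose g has (finite) one-sided derivatives g'(p*−0) and g'(p*+0) at p*. Then the function v(x) := sup_{p∈I} V(p;x) (which equals h(p*)ψ(x) for x < p* and g(x) for x ≥ p*) has one-sided derivatives at p*, and g'(p*+0) = v'(p*+0) ≤ v'(p*−0) ≤ g'(p*−0). -/
open Set

/-- Corollary 1: generalized smooth-pasting. If the threshold `pstar` is optimal over
threshold stopping times, then the value function `v` has one-sided derivatives at
`pstar` and `g'(pstar+0) = v'(pstar+0) ≤ v'(pstar-0) ≤ g'(pstar-0)`. -/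
theorem stmt_3 (I : Set ℝ) (hIopen : IsOpen I) (hIconn : I.OrdConnected)
    (hIne : I.Nonempty)
    (g ψ : ℝ → ℝ) (hψpos : ∀ x ∈ I, 0 < ψ x) (hψmono : StrictMonoOn ψ I)
    (V : ℝ → ℝ → ℝ)
    (hV : ∀ p ∈ I, ∀ x ∈ I, V p x = if x < p then (g p / ψ p) * ψ x else g x)
    (pstar : ℝ) (hpstar : pstar ∈ I)
    (hopt : ∀ p ∈ I, ∀ x ∈ I, V p x ≤ V pstar x)
    (ψ' : ℝ) (hψ' : HasDerivAt ψ ψ' pstar)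
    (gm gp : ℝ)
    (hgm : HasDerivWithinAt g gm (Set.Iic pstar) pstar)
    (hgp : HasDerivWithinAt g gp (Set.Ici pstar) pstar)
    (v : ℝ → ℝ)
    (hv : ∀ x, v x = if x < pstar then (g pstar / ψ pstar) * ψ x else g x) :
    ∃ vm vp : ℝ,
      HasDerivWithinAt v vm (Set.Iic pstar) pstar ∧
      HasDerivWithinAt v vp (Set.Ici pstar) pstar ∧
      vp = gp ∧ vp ≤ vm ∧ vm ≤ gm := by
  have hψ0 := hψpos pstar hpstar
  set c := g pstar / ψ pstar with hc
  have hcp : c * ψ pstar = g pstar := by rw [hc]; field_simp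
  have key : ∀ x ∈ I, 0 ≤ c * ψ x - g x := by
    intro x hx
    have hψx := hψpos x hx
    rcases lt_trichotomy x pstar with h | h | h
    · have := hopt x hx x hx
      rw [hV x hx x hx, hV pstar hpstar x hx, if_neg (lt_irrefl _), if_pos h] at this
      linarith
    · subst h; linarith
    · have := hopt x hx pstar hpstar
      rw [hV x hx pstar hpstar, hV pstar hpstar pstar hpstar, if_neg (lt_irrefl _),
        if_pos h, ← hcp] at this
      have h2 := le_of_mul_le_mul_right this hψ0
      rw [div_le_iff₀ hψx] at h2
      linarith
  have hI : ∀ᶠ x in nhds pstar, x ∈ I := hIopen.mem_nhds hpstar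
  have hp : HasDerivWithinAt (fun x => c * ψ x - g x) (c * ψ' - gp) (Set.Ioi pstar) pstar :=
    (hψ'.hasDerivWithinAt.const_mul c).sub (hgp.mono Ioi_subset_Ici_self)
  have hm : HasDerivWithinAt (fun x => c * ψ x - g x) (c * ψ' - gm) (Set.Iio pstar) pstar :=
    (hψ'.hasDerivWithinAt.const_mul c).sub (hgm.mono Iio_subset_Iic_self)
  rw [hasDerivWithinAt_iff_tendsto_slope' (by simp)] at hp hm
  have h1 : 0 ≤ c * ψ' - gp := by
    refine ge_of_tendsto hp ?_
    filter_upwards [self_mem_nhdsWithin, nhdsWithin_le_nhds hI] with x hx hxI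
    have hx' : pstar < x := hx
    rw [slope_def_field]
    exact div_nonneg (by linarith [key x hxI]) (by linarith)
  have h2 : c * ψ' - gm ≤ 0 := by
    refine le_of_tendsto hm ?_
    filter_upwards [self_mem_nhdsWithin, nhdsWithin_le_nhds hI] with x hx hxI
    have hx' : x < pstar := hx
    rw [slope_def_field]
    exact div_nonpos_of_nonneg_of_nonpos (by linarith [key x hxI]) (by linarith)
  have hvp : v pstar = g pstar := by rw [hv, if_neg (lt_irrefl _)]
  refine ⟨c * ψ', gp, ?_, ?_, rfl, by linarith, by linarith⟩
  · refine (hψ'.hasDerivWithinAt.const_mul c).congr ?_ (by rw [hvp, hcp])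
    intro x hx
    rcases lt_or_eq_of_le (show x ≤ pstar from hx) with h | h
    · rw [hv, if_pos h]
    · rw [h, hvp, hcp]
  · refine hgp.congr ?_ hvp
    intro x hx
    rw [hv, if_neg (not_lt.mpr hx)]
end

section
/- Let p* ∈ I be optimal over the class of threshold stopping times, suppose ψ is differentiable at p*, and suppose g is differentiable at p*. Then the function v(x) := sup_{p∈I} V(p;x) (which equals h(p*)ψ(x) for x < p* and g(x) for x ≥ p*) is differentiable at p* and v'(p*) = g'(p*). -/
open Set

/-- Remark after Corollary 1: if `g` is differentiable at the optimal threshold `pstar`,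
then the value function `v` is differentiable at `pstar` with `v'(pstar) = g'(pstar)`. -/
theorem stmt_4 (I : Set ℝ) (hIopen : IsOpen I) (hIconn : I.OrdConnected)
    (hIne : I.Nonempty)
    (g ψ : ℝ → ℝ) (hψpos : ∀ x ∈ I, 0 < ψ x) (hψmono : StrictMonoOn ψ I)
    (V : ℝ → ℝ → ℝ)
    (hV : ∀ p ∈ I, ∀ x ∈ I, V p x = if x < p then (g p / ψ p) * ψ x else g x)
    (pstar : ℝ) (hpstar : pstar ∈ I)
    (hopt : ∀ p ∈ I, ∀ x ∈ I, V p x ≤ V pstar x)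
    (ψ' : ℝ) (hψ' : HasDerivAt ψ ψ' pstar)
    (g' : ℝ) (hg' : HasDerivAt g g' pstar)
    (v : ℝ → ℝ)
    (hv : ∀ x, v x = if x < pstar then (g pstar / ψ pstar) * ψ x else g x) :
    HasDerivAt v g' pstar := by
  have hp0 := hψpos pstar hpstar
  have hnhds : I ∈ nhds pstar := hIopen.mem_nhds hpstar
  have key : ∀ p ∈ I, g p - (g pstar / ψ pstar) * ψ p ≤ 0 := by
    intro p hp
    rcases lt_trichotomy p pstar with h | h | h
    · have h1 := hopt p hp p hp
      rw [hV p hp p hp, hV pstar hpstar p hp, if_neg (lt_irrefl p), if_pos h] at h1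
      linarith
    · subst h
      rw [div_mul_cancel₀ _ hp0.ne']
      simp
    · obtain ⟨ε, hε, hball⟩ := Metric.isOpen_iff.1 hIopen pstar hpstar
      have hx : pstar - ε / 2 ∈ I := by
        apply hball
        rw [Metric.mem_ball, Real.dist_eq, abs_lt]
        constructor <;> linarith
      have h1 := hopt p hp _ hx
      rw [hV p hp _ hx, hV pstar hpstar _ hx, if_pos (by linarith), if_pos (by linarith)] at h1
      have h2 := le_of_mul_le_mul_right h1 (hψpos _ hx)
      have h3 := (div_le_iff₀ (hψpos p hp)).1 h2
      linarith
  have hstar : g pstar - (g pstar / ψ pstar) * ψ pstar = 0 := by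
    rw [div_mul_cancel₀ _ hp0.ne', sub_self]
  have hmax : IsLocalMax (fun p => g p - (g pstar / ψ pstar) * ψ p) pstar := by
    filter_upwards [hnhds] with p hp
    rw [hstar]
    exact key p hp
  have hd := hψ'.const_mul (g pstar / ψ pstar)
  have h0 : g' - (g pstar / ψ pstar) * ψ' = 0 := hmax.hasDerivAt_eq_zero (hg'.sub hd)
  have h0' : (g pstar / ψ pstar) * ψ' = g' := by linarith
  rw [h0'] at hd
  have hl : HasDerivWithinAt v g' (Iic pstar) pstar := by
    have hE : ∀ x ∈ Iic pstar, v x = (g pstar / ψ pstar) * ψ x := by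
      intro x hx
      rw [hv]
      split_ifs with h
      · rfl
      · have : x = pstar := le_antisymm hx (not_lt.1 h)
        subst this
        linarith
    exact hd.hasDerivWithinAt.congr hE (hE _ self_mem_Iic)
  have hr : HasDerivWithinAt v g' (Ici pstar) pstar := by
    have hE : ∀ x ∈ Ici pstar, v x = g x := by
      intro x hx
      rw [hv, if_neg (not_lt.2 hx)]
    exact hg'.hasDerivWithinAt.congr hE (hE _ self_mem_Ici)
  have hu := hl.union hr
  rw [Iic_union_Ici] at hu
  exact hasDerivWithinAt_univ.1 hu
end

section
/- Assume g(x₀) > 0 for some x₀ ∈ I. A threshold p* ∈ I is optimal over the class of lower-threshold stopping times (that is, W(p*;x) ≥ W(p;x) for all p, x ∈ I) if and only if the following two conditions hold: (i) g(p)/φ(p) ≤ g(p*)/φ(p*) for every p ∈ I with p > p*; and (ii) g/φ is non-decreasing on I ∩ (−∞, p*], i.e., g(p₁)/φ(p₁) ≤ g(p₂)/φ(p₂) whenever p₁ ≤ p₂ ≤ p*, p₁, p₂ ∈ I. -/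
open Set

/-- Theorem 2′: necessary and sufficient conditions for optimality of a
lower-threshold stopping time (the class of `r`-intervals). -/
theorem stmt_5 (I : Set ℝ) (hIopen : IsOpen I) (hIconn : I.OrdConnected)
    (hIne : I.Nonempty)
    (g φ : ℝ → ℝ) (hφpos : ∀ x ∈ I, 0 < φ x) (hφanti : StrictAntiOn φ I)
    (W : ℝ → ℝ → ℝ)
    (hW : ∀ p ∈ I, ∀ x ∈ I, W p x = if p < x then g p * φ x / φ p else g x)
    (hgpos : ∃ x₀ ∈ I, 0 < g x₀)
    (pstar : ℝ) (hpstar : pstar ∈ I) :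
    (∀ p ∈ I, ∀ x ∈ I, W p x ≤ W pstar x) ↔
      ((∀ p ∈ I, pstar < p → g p / φ p ≤ g pstar / φ pstar) ∧
       (∀ p₁ ∈ I, ∀ p₂ ∈ I, p₁ ≤ p₂ → p₂ ≤ pstar → g p₁ / φ p₁ ≤ g p₂ / φ p₂)) := by
  have key : ∀ p ∈ I, ∀ x ∈ I, W p x = φ x * (g (min p x) / φ (min p x)) := by
    intro p hp x hx
    rw [hW p hp x hx]
    split_ifs with h
    · rw [min_eq_left h.le]
      ring
    · rw [min_eq_right (not_lt.mp h)]
      have := (hφpos x hx).ne'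
      field_simp
  have key2 : ∀ p ∈ I, ∀ x ∈ I, (W p x ≤ W pstar x ↔
      g (min p x) / φ (min p x) ≤ g (min pstar x) / φ (min pstar x)) := by
    intro p hp x hx
    rw [key p hp x hx, key pstar hpstar x hx]
    exact mul_le_mul_iff_right₀ (hφpos x hx)
  constructor
  · intro H
    refine ⟨fun p hp h => ?_, fun p₁ h₁ p₂ h₂ h12 h2 => ?_⟩
    · have := (key2 p hp p hp).1 (H p hp p hp)
      rwa [min_self, min_eq_left h.le] at this
    · have := (key2 p₁ h₁ p₂ h₂).1 (H p₁ h₁ p₂ h₂)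
      rwa [min_eq_left h12, min_eq_right h2] at this
  · rintro ⟨H1, H2⟩ p hp x hx
    rw [key2 p hp x hx]
    have hm : min p x ∈ I := by
      rcases min_choice p x with h | h <;> rw [h] <;> assumption
    rcases le_or_gt x pstar with h | h
    · rw [min_eq_right h]
      exact H2 _ hm x hx (min_le_right _ _) h
    · rw [min_eq_left h.le]
      rcases le_or_gt (min p x) pstar with h' | h'
      · exact H2 _ hm _ hpstar h' le_rfl
      · exact H1 _ hm h'
end

section
/- Suppose p* ∈ I is optimal over the class of threshold stopping times (V(p*;x) ≥ V(p;x) for all p, x ∈ I) and g is twice differentiable at p*. Then the pair (H, p*) with H(x) := h(p*)ψ(x) solves the free-boundary problem: (1/2)σ(x)²H''(x) + a(x)H'(x) = ρH(x) for all x ∈ (l, p*), H(p*) = g(p*), H'(p*) = g'(p*); and moreover H''(p*) ≥ g''(p*). -/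
open Set

/-- Proposition 1: if the threshold `pstar` is optimal over threshold stopping times and
`g` is twice differentiable at `pstar`, then `(H, pstar)` with `H = h(pstar)·ψ` solves the
free-boundary problem, and moreover `H''(pstar) ≥ g''(pstar)`. -/
theorem stmt_6 (I : Set ℝ) (hIopen : IsOpen I) (hIconn : I.OrdConnected)
    (hIne : I.Nonempty)
    (a σ : ℝ → ℝ) (ρ : ℝ) (hρ : 0 < ρ)
    (ha : ContinuousOn a I) (hσ : ContinuousOn σ I) (hσpos : ∀ x ∈ I, 0 < σ x)
    (g ψ : ℝ → ℝ) (hψpos : ∀ x ∈ I, 0 < ψ x) (hψmono : StrictMonoOn ψ I)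
    (hψd : ∀ x ∈ I, DifferentiableAt ℝ ψ x)
    (hψd2 : ∀ x ∈ I, DifferentiableAt ℝ (deriv ψ) x)
    (hODE : ∀ x ∈ I, (1/2) * σ x ^ 2 * deriv (deriv ψ) x + a x * deriv ψ x = ρ * ψ x)
    (V : ℝ → ℝ → ℝ)
    (hV : ∀ p ∈ I, ∀ x ∈ I, V p x = if x < p then (g p / ψ p) * ψ x else g x)
    (pstar : ℝ) (hpstar : pstar ∈ I)
    (hopt : ∀ p ∈ I, ∀ x ∈ I, V p x ≤ V pstar x)
    (hg1 : ∀ᶠ x in nhds pstar, DifferentiableAt ℝ g x)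
    (hg2 : DifferentiableAt ℝ (deriv g) pstar)
    (H : ℝ → ℝ) (hH : ∀ x, H x = (g pstar / ψ pstar) * ψ x) :
    (∀ x ∈ I, x < pstar →
        (1/2) * σ x ^ 2 * deriv (deriv H) x + a x * deriv H x = ρ * H x) ∧
    H pstar = g pstar ∧
    deriv H pstar = deriv g pstar ∧
    deriv (deriv g) pstar ≤ deriv (deriv H) pstar := by
  obtain rfl : H = fun x => (g pstar / ψ pstar) * ψ x := funext hH
  set c := g pstar / ψ pstar with hc
  have hψ0 : ψ pstar ≠ 0 := (hψpos _ hpstar).ne'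
  have hcg : c * ψ pstar = g pstar := by rw [hc]; field_simp
  have hd1 : deriv (fun x => c * ψ x) = fun x => c * deriv ψ x := by
    funext x; exact deriv_const_mul_field c
  have hd2 : deriv (deriv (fun x => c * ψ x)) = fun x => c * deriv (deriv ψ) x := by
    rw [hd1]; funext x; exact deriv_const_mul_field c
  have hle : ∀ p ∈ I, g p ≤ c * ψ p := by
    intro p hp
    have hm : min p pstar ∈ I := by
      rcases min_choice p pstar with h | h <;> rw [h] <;> assumption
    obtain ⟨e, he, hb⟩ := Metric.isOpen_iff.1 hIopen _ hm
    have hx : min p pstar - e / 2 ∈ I := by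
      apply hb
      rw [Metric.mem_ball, Real.dist_eq, abs_lt]
      constructor <;> linarith
    have h1 : min p pstar - e / 2 < p := by linarith [min_le_left p pstar]
    have h2 : min p pstar - e / 2 < pstar := by linarith [min_le_right p pstar]
    have h := hopt p hp _ hx
    rw [hV p hp _ hx, hV pstar hpstar _ hx, if_pos h1, if_pos h2] at h
    have h3 := le_of_mul_le_mul_right h (hψpos _ hx)
    exact (div_le_iff₀ (hψpos p hp)).1 h3
  have hIn : I ∈ nhds pstar := hIopen.mem_nhds hpstar
  let f : ℝ → ℝ := fun x => c * ψ x - g x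
  have hf0 : f pstar = 0 := by simp only [f]; linarith
  have hmin : IsLocalMin f pstar := by
    filter_upwards [hIn] with x hx
    rw [hf0]
    have := hle x hx
    simp only [f]; linarith
  have hfd : deriv f =ᶠ[nhds pstar] fun x => c * deriv ψ x - deriv g x := by
    filter_upwards [hIn, hg1] with x hx hgx
    exact (((hψd x hx).hasDerivAt.const_mul c).sub hgx.hasDerivAt).deriv
  have hfdd : deriv (deriv f) pstar = c * deriv (deriv ψ) pstar - deriv (deriv g) pstar := by
    rw [hfd.deriv_eq]
    exact (((hψd2 _ hpstar).hasDerivAt.const_mul c).sub hg2.hasDerivAt).deriv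
  have hf1 : deriv f pstar = 0 := hmin.deriv_eq_zero
  have hfc : ContinuousAt f pstar :=
    ((hψd _ hpstar).continuousAt.const_mul c).sub hg1.self_of_nhds.continuousAt
  refine ⟨?_, hcg, ?_, ?_⟩
  · intro x hx _
    rw [hd2, hd1]
    linear_combination c * hODE x hx
  · rw [hd1]
    have := hfd.self_of_nhds
    simp only [hf1] at this ⊢
    linarith
  · rw [hd2]
    by_contra! hlt
    have hneg : deriv (deriv f) pstar < 0 := by rw [hfdd]; linarith
    have hmax := isLocalMax_of_deriv_deriv_neg hneg hf1 hfc
    have hz : f =ᶠ[nhds pstar] fun _ => (0 : ℝ) := by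
      filter_upwards [hmin, hmax] with x h1 h2
      rw [← hf0]; exact le_antisymm h2 h1
    have := hz.deriv.deriv_eq
    simp at this
    linarith
end

section
/- Suppose g is differentiable on I (so h = g/ψ is differentiable on I), p* ∈ I is the unique point of I with h'(p*) = 0, and h is twice differentiable at p* with h''(p*) < 0 (equivalently, the pair (H, p*) with H = h(p*)ψ is the unique solution of the free-boundary problem and H''(p*) > g''(p*)). Then h'(p) > 0 for all p ∈ (l, p*) and h'(p) < 0 for all p ∈ (p*, r); consequently p* is optimal over the class of threshold stopping times, i.e., V(p*;x) ≥ V(p;x) for all p, x ∈ I. -/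
open Set

/-- Proposition 2, case 1: if `pstar` is the unique stationary point of `h = g/ψ` on `I`
and `h''(pstar) < 0` (i.e. `(H, pstar)` is the unique solution of the free-boundary
problem with `H''(pstar) > g''(pstar)`), then `h' > 0` on `(l, pstar)`, `h' < 0` on
`(pstar, r)`, and `pstar` is optimal over the class of threshold stopping times. -/
theorem stmt_7 (I : Set ℝ) (hIopen : IsOpen I) (hIconn : I.OrdConnected)
    (hIne : I.Nonempty)
    (a σ : ℝ → ℝ) (ρ : ℝ) (hρ : 0 < ρ)
    (ha : ContinuousOn a I) (hσ : ContinuousOn σ I) (hσpos : ∀ x ∈ I, 0 < σ x)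
    (g ψ : ℝ → ℝ) (hψpos : ∀ x ∈ I, 0 < ψ x) (hψmono : StrictMonoOn ψ I)
    (hψd : ∀ x ∈ I, DifferentiableAt ℝ ψ x)
    (hψd2 : ∀ x ∈ I, DifferentiableAt ℝ (deriv ψ) x)
    (hODE : ∀ x ∈ I, (1/2) * σ x ^ 2 * deriv (deriv ψ) x + a x * deriv ψ x = ρ * ψ x)
    (hgd : ∀ x ∈ I, DifferentiableAt ℝ g x)
    (h : ℝ → ℝ) (hh : ∀ p, h p = g p / ψ p)
    (V : ℝ → ℝ → ℝ)
    (hV : ∀ p ∈ I, ∀ x ∈ I, V p x = if x < p then h p * ψ x else g x)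
    (pstar : ℝ) (hpstar : pstar ∈ I)
    (hstat : deriv h pstar = 0)
    (huniq : ∀ p ∈ I, deriv h p = 0 → p = pstar)
    (h'' : ℝ) (hh'' : HasDerivAt (deriv h) h'' pstar) (hneg : h'' < 0) :
    (∀ p ∈ I, p < pstar → 0 < deriv h p) ∧
    (∀ p ∈ I, pstar < p → deriv h p < 0) ∧
    (∀ p ∈ I, ∀ x ∈ I, V p x ≤ V pstar x) := by
  have hconv : Convex ℝ I := hIconn.convex
  have hhe : h = fun p => g p / ψ p := funext hh
  have hd : ∀ x ∈ I, DifferentiableAt ℝ h x := by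
    intro x hx
    rw [hhe]
    exact (hgd x hx).div (hψd x hx) (hψpos x hx).ne'
  have hev : ∀ᶠ x in nhdsWithin pstar {pstar}ᶜ, slope (deriv h) pstar x < 0 :=
    (hasDerivAt_iff_tendsto_slope.1 hh'').eventually_lt_const hneg
  have hIev : ∀ᶠ x in nhds pstar, x ∈ I := hIopen.mem_nhds hpstar
  obtain ⟨q1, hq1I, hq1, hq1s⟩ : ∃ q ∈ I, q < pstar ∧ 0 < deriv h q := by
    have e1 : ∀ᶠ x in nhdsWithin pstar (Iio pstar), slope (deriv h) pstar x < 0 :=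
      hev.filter_mono (nhdsWithin_mono _ (fun x hx => ne_of_lt hx))
    obtain ⟨q, ⟨hq, hqI⟩, hql⟩ :=
      ((e1.and (hIev.filter_mono nhdsWithin_le_nhds)).and self_mem_nhdsWithin).exists
    have hql : q < pstar := hql
    refine ⟨q, hqI, hql, ?_⟩
    rw [slope_def_field, hstat, sub_zero] at hq
    by_contra hc
    exact absurd hq (not_lt.2 (div_nonneg_of_nonpos (not_lt.1 hc) (by linarith)))
  obtain ⟨q2, hq2I, hq2, hq2s⟩ : ∃ q ∈ I, pstar < q ∧ deriv h q < 0 := by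
    have e1 : ∀ᶠ x in nhdsWithin pstar (Ioi pstar), slope (deriv h) pstar x < 0 :=
      hev.filter_mono (nhdsWithin_mono _ (fun x hx => ne_of_gt hx))
    obtain ⟨q, ⟨hq, hqI⟩, hql⟩ :=
      ((e1.and (hIev.filter_mono nhdsWithin_le_nhds)).and self_mem_nhdsWithin).exists
    have hql : pstar < q := hql
    refine ⟨q, hqI, hql, ?_⟩
    rw [slope_def_field, hstat, sub_zero] at hq
    by_contra hc
    exact absurd hq (not_lt.2 (div_nonneg (not_lt.1 hc) (by linarith)))
  have A : ∀ p ∈ I, p < pstar → 0 < deriv h p := by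
    rcases hasDerivWithinAt_forall_lt_or_forall_gt_of_forall_ne (f := h) (f' := deriv h) (m := 0)
      (hconv.inter (convex_Iio pstar))
      (fun x hx => (hd x hx.1).hasDerivAt.hasDerivWithinAt)
      (fun x hx hx0 => (ne_of_lt hx.2) (huniq x hx.1 hx0)) with h1 | h1
    · exact absurd (h1 q1 ⟨hq1I, hq1⟩) (not_lt.2 hq1s.le)
    · exact fun p hp hpl => h1 p ⟨hp, hpl⟩
  have B : ∀ p ∈ I, pstar < p → deriv h p < 0 := by
    rcases hasDerivWithinAt_forall_lt_or_forall_gt_of_forall_ne (f := h) (f' := deriv h) (m := 0)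
      (hconv.inter (convex_Ioi pstar))
      (fun x hx => (hd x hx.1).hasDerivAt.hasDerivWithinAt)
      (fun x hx hx0 => (ne_of_gt hx.2) (huniq x hx.1 hx0)) with h1 | h1
    · exact fun p hp hpl => h1 p ⟨hp, hpl⟩
    · exact absurd (h1 q2 ⟨hq2I, hq2⟩) (not_lt.2 hq2s.le)
  have hmono : MonotoneOn h (I ∩ Iic pstar) := by
    refine monotoneOn_of_deriv_nonneg (hconv.inter (convex_Iic pstar))
      (fun x hx => (hd x hx.1).continuousAt.continuousWithinAt)
      (fun x hx => (hd x (interior_subset hx).1).differentiableWithinAt) ?_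
    intro x hx
    rw [interior_inter, interior_Iic] at hx
    exact (A x (interior_subset hx.1) hx.2).le
  have hanti : AntitoneOn h (I ∩ Ici pstar) := by
    refine antitoneOn_of_deriv_nonpos (hconv.inter (convex_Ici pstar))
      (fun x hx => (hd x hx.1).continuousAt.continuousWithinAt)
      (fun x hx => (hd x (interior_subset hx).1).differentiableWithinAt) ?_
    intro x hx
    rw [interior_inter, interior_Ici] at hx
    exact (B x (interior_subset hx.1) hx.2).le
  have hmax : ∀ p ∈ I, h p ≤ h pstar := by
    intro p hp
    rcases le_total p pstar with hc | hc
    · exact hmono ⟨hp, hc⟩ ⟨hpstar, self_mem_Iic⟩ hc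
    · exact hanti ⟨hpstar, self_mem_Ici⟩ ⟨hp, hc⟩ hc
  have hg : ∀ x ∈ I, g x = h x * ψ x := by
    intro x hx
    rw [hh, div_mul_cancel₀ _ (hψpos x hx).ne']
  refine ⟨A, B, ?_⟩
  intro p hp x hx
  rw [hV p hp x hx, hV pstar hpstar x hx, hg x hx]
  have hpos := (hψpos x hx).le
  split_ifs with h1 h2 h2
  · exact mul_le_mul_of_nonneg_right (hmax p hp) hpos
  · have h2 := not_lt.1 h2
    exact mul_le_mul_of_nonneg_right (hanti ⟨hx, h2⟩ ⟨hp, h2.trans h1.le⟩ h1.le) hpos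
  · exact mul_le_mul_of_nonneg_right (hmax x hx) hpos
  · exact le_refl _
end

section
/- Suppose g and ψ are continuously differentiable on I (so h = g/ψ is continuously differentiable), and p* ∈ I satisfies: h'(p*) = 0; h is twice differentiable at p* with h''(p*) < 0 (equivalently H''(p*) > g''(p*) for H = h(p*)ψ); h(x) ≤ h(p*) for all x ∈ (l, p*) (i.e., H(x) ≥ g(x) on (l,p*)); and every other point p̃ ∈ I with h'(p̃) = 0 and p̃ ≠ p* satisfies either (2a) p̃ < p*, or (2b) p̃ > p* and there exists an integer n > 2 such that h is n times differentiable at p̃ with h^{(k)}(p̃) = 0 for k = 1, …, n−1 and h^{(n)}(p̃) < 0. Then h'(p) ≤ 0 for all p ∈ (p*, r), and p* is optimal over the class of threshold stopping times, i.e., V(p*;x) ≥ V(p;x) for all p, x ∈ I. -/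
open Set

theorem aux_cont (h : ℝ → ℝ) (s : ℝ) (n k : ℕ) (hk : k ≤ n) (hc : ContDiffAt ℝ n h s) :
    ContinuousAt (iteratedDeriv k h) s := by
  have h1 : ContDiffAt ℝ 0 (iteratedFDeriv ℝ k h) s :=
    hc.iteratedFDeriv_right (by rw [zero_add]; exact_mod_cast hk)
  have h2 : iteratedDeriv k h = fun x => iteratedFDeriv ℝ k h x (fun _ => 1) := by
    ext x; rfl
  rw [h2]
  exact (ContinuousMultilinearMap.apply ℝ (fun _ : Fin k => ℝ) ℝ (fun _ => 1)).continuous.continuousAt.comp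
    h1.continuousAt

theorem aux_right_neg (h : ℝ → ℝ) (s : ℝ) (n : ℕ) (hn : 1 ≤ n) (hc : ContDiffAt ℝ n h s)
    (hz : ∀ k : ℕ, 1 ≤ k → k ≤ n - 1 → iteratedDeriv k h s = 0)
    (hneg : iteratedDeriv n h s < 0) :
    ∃ ε > 0, ∀ x, s < x → x < s + ε → deriv h x < 0 := by
  have hev : ∀ᶠ x in nhds s, ContDiffAt ℝ n h x := hc.eventually (by simp)
  have hcont : ContinuousAt (iteratedDeriv n h) s := aux_cont h s n n le_rfl hc
  have hev2 : ∀ᶠ x in nhds s, iteratedDeriv n h x < 0 := hcont.eventually_lt_const hneg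
  obtain ⟨ε, hε, hb⟩ := Metric.eventually_nhds_iff.1 (hev.and hev2)
  have hb' : ∀ x, s ≤ x → x < s + ε → ContDiffAt ℝ n h x ∧ iteratedDeriv n h x < 0 := by
    intro x h1 h2
    apply hb
    rw [Real.dist_eq, abs_lt]
    constructor <;> linarith
  refine ⟨ε, hε, ?_⟩
  have key : ∀ j : ℕ, j ≤ n - 1 → ∀ x, s < x → x < s + ε → iteratedDeriv (n - j) h x < 0 := by
    intro j
    induction j with
    | zero => intro _ x h1 h2; exact (hb' x h1.le h2).2
    | succ j ih =>
      intro hj x h1 h2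
      have ih' := ih (by omega)
      obtain ⟨k, hk⟩ : ∃ k, k = n - (j + 1) := ⟨_, rfl⟩
      have hk1 : n - j = k + 1 := by omega
      rw [hk1] at ih'
      rw [← hk]
      have hanti : StrictAntiOn (iteratedDeriv k h) (Set.Icc s x) := by
        apply strictAntiOn_of_deriv_neg (convex_Icc s x)
        · intro y hy
          exact (aux_cont h y n k (by omega) (hb' y hy.1 (by linarith [hy.2])).1).continuousWithinAt
        · intro y hy
          rw [interior_Icc] at hy
          rw [← iteratedDeriv_succ]
          exact ih' y hy.1 (by linarith [hy.2])
      have := hanti (Set.left_mem_Icc.2 h1.le) (Set.right_mem_Icc.2 h1.le) h1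
      rw [hz k (by omega) (by omega)] at this
      exact this
  intro x h1 h2
  have := key (n - 1) le_rfl x h1 h2
  rw [show n - (n - 1) = 1 by omega, iteratedDeriv_one] at this
  exact this

/-- Proposition 2, case 2: free-boundary solution `(H, pstar)` with `H''(pstar) > g''(pstar)`
(i.e. `h'(pstar) = 0`, `h''(pstar) < 0`), with `H ≥ g` on `(l, pstar)`, such that any other
stationary point `p̃` of `h` is either below `pstar`, or above `pstar` with vanishing
derivatives of orders `2, …, n−1` and `h⁽ⁿ⁾(p̃) < 0` for some `n > 2`.  Then `h' ≤ 0` on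
`(pstar, r)` and `pstar` is optimal over the class of threshold stopping times. -/
theorem stmt_8 (I : Set ℝ) (hIopen : IsOpen I) (hIconn : I.OrdConnected)
    (hIne : I.Nonempty)
    (a σ : ℝ → ℝ) (ρ : ℝ) (hρ : 0 < ρ)
    (ha : ContinuousOn a I) (hσ : ContinuousOn σ I) (hσpos : ∀ x ∈ I, 0 < σ x)
    (g ψ : ℝ → ℝ) (hψpos : ∀ x ∈ I, 0 < ψ x) (hψmono : StrictMonoOn ψ I)
    (hψd : ∀ x ∈ I, DifferentiableAt ℝ ψ x)
    (hψd2 : ∀ x ∈ I, DifferentiableAt ℝ (deriv ψ) x)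
    (hODE : ∀ x ∈ I, (1/2) * σ x ^ 2 * deriv (deriv ψ) x + a x * deriv ψ x = ρ * ψ x)
    (hgC1 : ContDiffOn ℝ 1 g I) (hψC1 : ContDiffOn ℝ 1 ψ I)
    (h : ℝ → ℝ) (hh : ∀ p, h p = g p / ψ p)
    (V : ℝ → ℝ → ℝ)
    (hV : ∀ p ∈ I, ∀ x ∈ I, V p x = if x < p then h p * ψ x else g x)
    (pstar : ℝ) (hpstar : pstar ∈ I)
    (hstat : deriv h pstar = 0)
    (h'' : ℝ) (hh'' : HasDerivAt (deriv h) h'' pstar) (hneg : h'' < 0)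
    (hmaj : ∀ x ∈ I, x < pstar → h x ≤ h pstar)
    (hother : ∀ pt ∈ I, deriv h pt = 0 → pt ≠ pstar →
      (pt < pstar ∨
        (pstar < pt ∧ ∃ n : ℕ, 2 < n ∧ ContDiffAt ℝ n h pt ∧
          (∀ k : ℕ, 1 ≤ k → k ≤ n - 1 → iteratedDeriv k h pt = 0) ∧
          iteratedDeriv n h pt < 0))) :
    (∀ p ∈ I, pstar < p → deriv h p ≤ 0) ∧
    (∀ p ∈ I, ∀ x ∈ I, V p x ≤ V pstar x) := by
  have hfun : h = fun p => g p / ψ p := funext hh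
  have hC1 : ContDiffOn ℝ 1 h I := by
    rw [hfun]
    exact hgC1.div hψC1 (fun x hx => (hψpos x hx).ne')
  have hdc : ContinuousOn (deriv h) I := hC1.continuousOn_deriv_of_isOpen hIopen le_rfl
  have hgh : ∀ x ∈ I, g x = h x * ψ x := by
    intro x hx
    rw [hh, div_mul_cancel₀ _ (hψpos x hx).ne']
  have hstar : ∃ ε > 0, ∀ x, pstar < x → x < pstar + ε → deriv h x < 0 := by
    have h1 := (hasDerivAt_iff_tendsto_slope.1 hh'').eventually_lt_const hneg
    obtain ⟨ε, hε, hb⟩ := Metric.eventually_nhds_iff.1 (eventually_nhdsWithin_iff.1 h1)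
    refine ⟨ε, hε, fun x hx1 hx2 => ?_⟩
    have h2 := hb (y := x) (by rw [Real.dist_eq, abs_lt]; constructor <;> linarith)
      (by simpa using hx1.ne')
    rw [slope_def_field, hstat, sub_zero, div_neg_iff] at h2
    rcases h2 with h2 | h2
    · linarith [h2.2]
    · exact h2.1
  have hmain : ∀ p ∈ I, pstar < p → deriv h p ≤ 0 := by
    intro q hq hpq
    by_contra hcon
    push Not at hcon
    have hsub : Icc pstar q ⊆ I := hIconn.out hpstar hq
    have hcl : IsClosed (Icc pstar q ∩ (deriv h) ⁻¹' Iic 0) :=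
      (hdc.mono hsub).preimage_isClosed_of_isClosed isClosed_Icc isClosed_Iic
    have hcpt : IsCompact (Icc pstar q ∩ (deriv h) ⁻¹' Iic 0) :=
      isCompact_Icc.of_isClosed_subset hcl inter_subset_left
    obtain ⟨s, ⟨hsI, hs0⟩, hsmax⟩ := hcpt.exists_isGreatest
      ⟨pstar, left_mem_Icc.2 hpq.le, by simp [hstat]⟩
    have hs0' : deriv h s ≤ 0 := hs0
    have hsq : s < q := by
      rcases hsI.2.lt_or_eq with h1 | h1
      · exact h1
      · rw [h1] at hs0'; linarith
    have hpos : ∀ x, s < x → x ≤ q → 0 < deriv h x := by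
      intro x h1 h2
      by_contra h3
      push Not at h3
      exact absurd (hsmax ⟨⟨hsI.1.trans h1.le, h2⟩, h3⟩) (not_le.2 h1)
    have hsz : deriv h s = 0 := by
      by_contra hne
      have hlt : deriv h s < 0 := lt_of_le_of_ne hs0' hne
      obtain ⟨y, hy, hy0⟩ := intermediate_value_Icc hsq.le
        (hdc.mono ((Icc_subset_Icc_left hsI.1).trans hsub)) ⟨hs0', hcon.le⟩
      have : s < y := lt_of_le_of_ne hy.1 (by rintro rfl; exact hne hy0)
      linarith [hpos y this hy.2]
    have hright : ∃ ε > 0, ∀ x, s < x → x < s + ε → deriv h x < 0 := by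
      by_cases hsp : s = pstar
      · rw [hsp]; exact hstar
      · rcases hother s (hsub hsI) hsz hsp with h1 | ⟨_, n, hn, hc, hz, hng⟩
        · exact absurd hsI.1 (not_le.2 h1)
        · exact aux_right_neg h s n (by omega) hc hz hng
    obtain ⟨ε, hε, hb⟩ := hright
    obtain ⟨x, hx1, hx2⟩ := exists_between (lt_min hsq (by linarith : s < s + ε))
    have h1 := hb x hx1 (hx2.trans_le (min_le_right _ _))
    have h2 := hpos x hx1 (hx2.le.trans (min_le_left _ _))
    linarith
  refine ⟨hmain, ?_⟩
  have hanti : ∀ x ∈ I, ∀ y ∈ I, pstar ≤ x → x ≤ y → h y ≤ h x := by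
    intro x hx y hy h1 h2
    have hsub : Icc x y ⊆ I := hIconn.out hx hy
    have : AntitoneOn h (Icc x y) := by
      apply antitoneOn_of_deriv_nonpos (convex_Icc x y) (hC1.continuousOn.mono hsub)
      · exact (hC1.differentiableOn (by simp)).mono (interior_subset.trans hsub)
      · intro z hz
        have hz' := hsub (interior_subset hz)
        rw [interior_Icc] at hz
        exact hmain z hz' (h1.trans_lt hz.1)
    exact this (left_mem_Icc.2 h2) (right_mem_Icc.2 h2) h2
  have hmax : ∀ x ∈ I, h x ≤ h pstar := by
    intro x hx
    rcases lt_or_ge x pstar with h1 | h1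
    · exact hmaj x hx h1
    · exact hanti pstar hpstar x hx le_rfl h1
  intro p hp x hx
  rw [hV p hp x hx, hV pstar hpstar x hx]
  have hψ := (hψpos x hx).le
  split_ifs with h1 h2 h2
  · exact mul_le_mul_of_nonneg_right (hmax p hp) hψ
  · rw [hgh x hx]
    exact mul_le_mul_of_nonneg_right (hanti x hx p hp (not_lt.1 h2) h1.le) hψ
  · rw [hgh x hx]
    exact mul_le_mul_of_nonneg_right (hmax x hx) hψ
  · exact le_rfl
end

section
/- For every δ > 0, h_δ is differentiable on (0,∞) with h_δ'(p) = (p−1)²·p^{−δ−1}·((3−δ)p + δ) for all p > 0. Consequently, if 0 < δ ≤ 3 then h_δ'(p) ≥ 0 for all p > 0 and h_δ'(p) = 0 if and only if p = 1; i.e., for 0 < δ ≤ 3 the free-boundary problem has the unique solution (H, p̄) = (x ↦ x^δ, 1). -/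
open Set Real

/-- For the example `h_δ(p) = 1 + (p−1)³ p^{−δ}`: the derivative is
`h_δ'(p) = (p−1)²·p^{−δ−1}·((3−δ)p + δ)` on `(0, ∞)`; hence for `0 < δ ≤ 3` the
derivative is nonnegative on `(0, ∞)` and vanishes exactly at `p = 1` (so the
free-boundary problem has the unique solution `p̄ = 1`). -/
theorem stmt_11 (δ : ℝ) (hδ : 0 < δ) (h : ℝ → ℝ)
    (hh : ∀ p : ℝ, h p = 1 + (p - 1) ^ 3 * p ^ (-δ)) :
    (∀ p : ℝ, 0 < p →
      HasDerivAt h ((p - 1) ^ 2 * p ^ (-δ - 1) * ((3 - δ) * p + δ)) p) ∧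
    (δ ≤ 3 → ∀ p : ℝ, 0 < p → 0 ≤ deriv h p ∧ (deriv h p = 0 ↔ p = 1)) := by
  have key : ∀ p : ℝ, 0 < p →
      HasDerivAt h ((p - 1) ^ 2 * p ^ (-δ - 1) * ((3 - δ) * p + δ)) p := by
    intro p hp
    have e : h = fun p : ℝ => 1 + (p - 1) ^ 3 * p ^ (-δ) := funext hh
    rw [e]
    have h1 : HasDerivAt (fun p : ℝ => (p - 1) ^ 3) (3 * (p - 1) ^ 2) p := by
      simpa using ((hasDerivAt_id p).sub_const 1).fun_pow 3
    have h2 : HasDerivAt (fun p : ℝ => p ^ (-δ)) (-δ * p ^ (-δ - 1)) p :=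
      Real.hasDerivAt_rpow_const (Or.inl hp.ne')
    have h3 := (h1.mul h2).const_add 1
    have e2 : p ^ (-δ) = p ^ (-δ - 1) * p := by
      rw [← Real.rpow_add_one hp.ne']
      congr 1
      ring
    refine h3.congr_deriv ?_
    rw [e2]
    ring
  refine ⟨key, fun h3 p hp => ?_⟩
  rw [(key p hp).deriv]
  have a : 0 < p ^ (-δ - 1) := Real.rpow_pos_of_pos hp _
  have b : 0 < (3 - δ) * p + δ := by
    have := mul_nonneg (sub_nonneg.2 h3) hp.le
    linarith
  refine ⟨by positivity, ?_, ?_⟩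
  · intro h0
    have h4 : (p - 1) ^ 2 = 0 := by
      simpa [a.ne', b.ne'] using h0
    have := pow_eq_zero_iff (two_ne_zero) |>.1 h4
    linarith
  · rintro rfl
    simp
end

section
/- If 0 < δ < 3, then h_δ(p) → +∞ as p → +∞, so sup_{p>0} h_δ(p) = +∞ (hence the threshold stopping time τ₁ corresponding to the unique free-boundary solution p̄ = 1 is not optimal: V(p;x) = h_δ(p)x^δ → ∞ as p → ∞ for every x > 0). If δ = 3, then h_3(p) < 2 for every p > 0 and h_3(p) → 2 as p → +∞, so sup_{p>0} h_3(p) = 2 and the supremum is not attained (V(p;x) ↑ 2x³ for every x > 0). -/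
open Set Real Filter

/-- For `0 < δ < 3`, `h_δ(p) → +∞` as `p → ∞` (so the stopping time corresponding to the
free-boundary point `p̄ = 1` is not optimal: `V(p;x) = h_δ(p)x^δ → ∞` for every `x > 0`);
for `δ = 3`, `h_3 < 2` on `(0, ∞)` and `h_3(p) → 2`, so `sup h_3 = 2` is not attained. -/
theorem stmt_12 (δ : ℝ) (hδ : 0 < δ) (h : ℝ → ℝ)
    (hh : ∀ p : ℝ, h p = 1 + (p - 1) ^ 3 * p ^ (-δ)) :
    (δ < 3 → Tendsto h atTop atTop ∧
      ∀ x : ℝ, 0 < x → Tendsto (fun p => h p * x ^ δ) atTop atTop) ∧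
    (δ = 3 → (∀ p : ℝ, 0 < p → h p < 2) ∧
      Tendsto h atTop (nhds 2) ∧
      IsLUB (h '' Set.Ioi (0 : ℝ)) 2 ∧ 2 ∉ h '' Set.Ioi (0 : ℝ)) := by
  have key : ∀ p : ℝ, 0 < p → h p = 1 + (1 - p⁻¹) ^ 3 * p ^ (3 - δ) := by
    intro p hp
    have e : p ^ (3 - δ) = p ^ 3 * p ^ (-δ) := by
      rw [sub_eq_add_neg, Real.rpow_add hp]
      congr 1
      exact_mod_cast Real.rpow_natCast p 3
    have e2 : (1 - p⁻¹) * p = p - 1 := by field_simp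
    rw [hh, e, ← e2]
    ring
  have lim1 : Tendsto (fun p : ℝ => (1 - p⁻¹) ^ 3) atTop (nhds 1) := by
    have := ((tendsto_const_nhds (x := (1 : ℝ))).sub
      (tendsto_inv_atTop_zero (𝕜 := ℝ))).pow 3
    simpa using this
  have ev : (fun p : ℝ => 1 + (1 - p⁻¹) ^ 3 * p ^ (3 - δ)) =ᶠ[atTop] h := by
    filter_upwards [eventually_gt_atTop 0] with p hp
    exact (key p hp).symm
  refine ⟨fun hlt => ?_, fun heq => ?_⟩
  · have T : Tendsto h atTop atTop := by
      refine Tendsto.congr' ev ?_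
      exact tendsto_atTop_add_const_left _ _
        (lim1.pos_mul_atTop one_pos (tendsto_rpow_atTop (by linarith)))
    exact ⟨T, fun x hx => T.atTop_mul_const (Real.rpow_pos_of_pos hx δ)⟩
  · have key3 : ∀ p : ℝ, 0 < p → h p = 1 + (1 - p⁻¹) ^ 3 := by
      intro p hp
      rw [key p hp, heq]
      simp
    have B : ∀ p : ℝ, 0 < p → h p < 2 := by
      intro p hp
      have hi : 0 < p⁻¹ := inv_pos.mpr hp
      rw [key3 p hp]
      nlinarith [mul_pos hi (show 0 < 3 - 3 * p⁻¹ + p⁻¹ ^ 2 by nlinarith [sq_nonneg (2 * p⁻¹ - 3)])]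
    have T : Tendsto h atTop (nhds 2) := by
      have t : Tendsto (fun p : ℝ => 1 + (1 - p⁻¹) ^ 3) atTop (nhds 2) := by
        have := lim1.const_add 1
        norm_num at this
        exact this
      refine Tendsto.congr' ?_ t
      filter_upwards [eventually_gt_atTop 0] with p hp
      exact (key3 p hp).symm
    refine ⟨B, T, ⟨?_, ?_⟩, ?_⟩
    · rintro _ ⟨p, hp, rfl⟩
      exact (B p hp).le
    · intro b hb
      refine le_of_tendsto T ?_
      filter_upwards [eventually_gt_atTop 0] with p hp
      exact hb ⟨p, hp, rfl⟩
    · rintro ⟨p, hp, e⟩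
      exact (B p hp).ne e
end

section
/- If δ > 3, then the set of points p > 0 with h_δ'(p) = 0 is exactly {1, δ/(δ−3)}; i.e., for δ > 3 the free-boundary problem has exactly two solutions, (x ↦ x^δ, 1) and (x ↦ h_δ(p_δ)x^δ, p_δ) with p_δ = δ/(δ−3). -/
open Set Real

/-- For `δ > 3`, the stationary points of `h_δ(p) = 1 + (p−1)³ p^{−δ}` on `(0, ∞)` are
exactly `{1, δ/(δ−3)}`: the free-boundary problem has exactly these two solutions. -/
theorem stmt_13 (δ : ℝ) (hδ : 3 < δ) (h : ℝ → ℝ)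
    (hh : ∀ p : ℝ, h p = 1 + (p - 1) ^ 3 * p ^ (-δ)) :
    {p : ℝ | 0 < p ∧ deriv h p = 0} = {1, δ / (δ - 3)} := by
  have hd3 : 0 < δ - 3 := by linarith
  have key : ∀ p : ℝ, 0 < p →
      deriv h p = (p - 1) ^ 2 * p ^ (-δ - 1) * (δ - (δ - 3) * p) := by
    intro p hp
    have e : h = fun p => 1 + (p - 1) ^ 3 * p ^ (-δ) := funext hh
    have h1 : HasDerivAt (fun p : ℝ => (p - 1) ^ 3) (3 * (p - 1) ^ 2) p := by
      simpa using ((hasDerivAt_id p).sub_const 1).fun_pow 3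
    have h2 : HasDerivAt (fun p : ℝ => p ^ (-δ)) (-δ * p ^ (-δ - 1)) p :=
      Real.hasDerivAt_rpow_const (Or.inl hp.ne')
    have h3 : p ^ (-δ) = p ^ (-δ - 1) * p := by
      rw [← Real.rpow_add_one hp.ne']
      congr 1
      ring
    have h4 := ((h1.mul h2).const_add 1).deriv
    rw [e]
    refine Eq.trans h4 ?_
    rw [h3]
    ring
  ext p
  simp only [mem_ofPred_eq, mem_insert_iff, mem_singleton_iff]
  constructor
  · rintro ⟨hp, hd⟩
    rw [key p hp] at hd
    have hpos : p ^ (-δ - 1) ≠ 0 := (Real.rpow_pos_of_pos hp _).ne'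
    rcases mul_eq_zero.mp hd with h1 | h1
    · rcases mul_eq_zero.mp h1 with h2 | h2
      · left
        have := pow_eq_zero_iff (two_ne_zero) |>.mp h2
        linarith
      · exact absurd h2 hpos
    · right
      rw [eq_div_iff hd3.ne']
      linarith
  · rintro (rfl | rfl)
    · exact ⟨one_pos, by rw [key 1 one_pos]; ring⟩
    · have hp : 0 < δ / (δ - 3) := div_pos (by linarith) hd3
      refine ⟨hp, ?_⟩
      rw [key _ hp, mul_div_cancel₀ _ hd3.ne', sub_self, mul_zero]
end

section
/- If δ > 3, then with p_δ = δ/(δ−3): h_δ'(p) ≥ 0 for all p ∈ (0, p_δ] and h_δ'(p) ≤ 0 for all p ∈ [p_δ, ∞); hence h_δ attains its global maximum over (0,∞) at p_δ, and in particular h_δ(p_δ) > h_δ(1) = 1 (so the free-boundary solution with boundary point 1 does not solve the optimal stopping problem, while the threshold p_δ is optimal over the class of threshold stopping times). -/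
open Set Real

/-- For `δ > 3` and `p_δ = δ/(δ−3)`: `h_δ' ≥ 0` on `(0, p_δ]` and `h_δ' ≤ 0` on
`[p_δ, ∞)`, so `h_δ` attains its global maximum over `(0, ∞)` at `p_δ`; in particular
`h_δ(p_δ) > h_δ(1) = 1` (so the free-boundary solution with boundary `1` does not solve
the optimal stopping problem, while the threshold `p_δ` is optimal). -/
theorem stmt_14 (δ : ℝ) (hδ : 3 < δ) (h : ℝ → ℝ)
    (hh : ∀ p : ℝ, h p = 1 + (p - 1) ^ 3 * p ^ (-δ)) :
    (∀ p : ℝ, 0 < p → p ≤ δ / (δ - 3) → 0 ≤ deriv h p) ∧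
    (∀ p : ℝ, δ / (δ - 3) ≤ p → deriv h p ≤ 0) ∧
    (∀ p : ℝ, 0 < p → h p ≤ h (δ / (δ - 3))) ∧
    h 1 = 1 ∧ 1 < h (δ / (δ - 3)) := by
  have hd0 : 0 < δ - 3 := by linarith
  have hq : 1 < δ / (δ - 3) := by rw [lt_div_iff₀ hd0]; linarith
  have hD : ∀ p : ℝ, 0 < p →
      HasDerivAt h ((p - 1) ^ 2 * p ^ (-δ - 1) * (δ - (δ - 3) * p)) p := by
    intro p hp
    have e : h = fun p : ℝ => 1 + (p - 1) ^ 3 * p ^ (-δ) := funext hh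
    rw [e]
    have h1 : HasDerivAt (fun p : ℝ => (p - 1) ^ 3) (3 * (p - 1) ^ 2) p := by
      exact (((hasDerivAt_id p).sub_const 1).pow 3).congr_deriv (by simp)
    have h2 : HasDerivAt (fun p : ℝ => p ^ (-δ)) (-δ * p ^ (-δ - 1)) p :=
      Real.hasDerivAt_rpow_const (Or.inl hp.ne')
    have h3 : p ^ (-δ) = p ^ (-δ - 1) * p := by
      rw [← Real.rpow_add_one hp.ne']; congr 1; ring
    refine ((h1.mul h2).const_add 1).congr_deriv ?_
    rw [h3]; ring
  have hA : ∀ p : ℝ, 0 < p → p ≤ δ / (δ - 3) → 0 ≤ deriv h p := by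
    intro p hp hle
    rw [(hD p hp).deriv]
    rw [le_div_iff₀ hd0] at hle
    have : 0 ≤ δ - (δ - 3) * p := by linarith
    positivity
  have hB : ∀ p : ℝ, δ / (δ - 3) ≤ p → deriv h p ≤ 0 := by
    intro p hle
    have hp : 0 < p := by linarith
    rw [(hD p hp).deriv]
    rw [div_le_iff₀ hd0] at hle
    exact mul_nonpos_of_nonneg_of_nonpos (by positivity) (by linarith)
  refine ⟨hA, hB, ?_, ?_, ?_⟩
  · intro p hp
    rcases le_total p (δ / (δ - 3)) with hle | hle
    · have hm : MonotoneOn h (Icc p (δ / (δ - 3))) := by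
        apply monotoneOn_of_deriv_nonneg (convex_Icc _ _)
        · intro x hx
          exact (hD x (lt_of_lt_of_le hp hx.1)).continuousAt.continuousWithinAt
        · intro x hx
          rw [interior_Icc] at hx
          exact (hD x (hp.trans hx.1)).differentiableAt.differentiableWithinAt
        · intro x hx
          rw [interior_Icc] at hx
          exact hA x (hp.trans hx.1) hx.2.le
      exact hm (left_mem_Icc.2 hle) (right_mem_Icc.2 hle) hle
    · have hm : AntitoneOn h (Icc (δ / (δ - 3)) p) := by
        apply antitoneOn_of_deriv_nonpos (convex_Icc _ _)
        · intro x hx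
          exact (hD x (by linarith [hx.1])).continuousAt.continuousWithinAt
        · intro x hx
          rw [interior_Icc] at hx
          exact (hD x (by linarith [hx.1])).differentiableAt.differentiableWithinAt
        · intro x hx
          rw [interior_Icc] at hx
          exact hB x hx.1.le
      exact hm (left_mem_Icc.2 hle) (right_mem_Icc.2 hle) hle
  · rw [hh]; norm_num
  · rw [hh]
    have h1 : 0 < δ / (δ - 3) - 1 := by linarith
    have h2 : 0 < (δ / (δ - 3)) ^ (-δ) := Real.rpow_pos_of_pos (by linarith) _
    have := mul_pos (pow_pos h1 3) h2
    linarith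
end

section
/- If δ > 3, then for every x > δ/(δ−3) the payoff g_δ satisfies Lg_δ(x) − ρg_δ(x) = (x−1)·((9/2)x² − (3/2)x − (δ²/2)(x−1)²) ≤ −(9/2)·δ/(δ−3)² < 0; that is, (1/2)x²g_δ''(x) + (1/2)x g_δ'(x) − (δ²/2)g_δ(x) is bounded above by the strictly negative constant −(9/2)δ/(δ−3)² on (δ/(δ−3), ∞). (The paper asserts this negativity with the bound −(3/2)δ/(δ−3); it is the key inequality showing that the threshold p_δ = δ/(δ−3) is optimal over all stopping times.) -/
open Set Real

/-- For `δ > 3` and `x > δ/(δ−3)`, with `g_δ(x) = (x−1)³ + x^δ` and `ρ = δ²/2`: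
`Lg_δ(x) − ρ g_δ(x) = (x−1)·((9/2)x² − (3/2)x − (δ²/2)(x−1)²)`, and this quantity is
bounded above by the strictly negative constant `−(9/2)·δ/(δ−3)²`. -/
theorem stmt_15 (δ : ℝ) (hδ : 3 < δ) (g : ℝ → ℝ)
    (hg : ∀ x : ℝ, g x = (x - 1) ^ 3 + x ^ δ) :
    ∀ x : ℝ, δ / (δ - 3) < x →
      (1/2) * x ^ 2 * deriv (deriv g) x + (1/2) * x * deriv g x - δ ^ 2 / 2 * g x
        = (x - 1) * ((9/2) * x ^ 2 - (3/2) * x - δ ^ 2 / 2 * (x - 1) ^ 2) ∧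
      (x - 1) * ((9/2) * x ^ 2 - (3/2) * x - δ ^ 2 / 2 * (x - 1) ^ 2)
        ≤ -((9/2) * δ / (δ - 3) ^ 2) ∧
      -((9/2) * δ / (δ - 3) ^ 2) < 0 := by
  have hg' : g = fun x : ℝ => (x - 1) ^ 3 + x ^ δ := funext hg
  have hd : 0 < δ - 3 := by linarith
  have h1 : ∀ y : ℝ, 0 < y → HasDerivAt g (3 * (y - 1) ^ 2 + δ * y ^ (δ - 1)) y := by
    intro y hy
    rw [hg']
    have ha := ((hasDerivAt_id' y).sub_const 1).pow 3
    have hb := Real.hasDerivAt_rpow_const (x := y) (p := δ) (Or.inl hy.ne')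
    refine HasDerivAt.congr_deriv (ha.add hb) ?_
    norm_num
  intro x hx
  have hp : 1 < δ / (δ - 3) := by
    rw [lt_div_iff₀ hd]; linarith
  have hx0 : 0 < x := by linarith
  have h2 : HasDerivAt (deriv g) (6 * (x - 1) + δ * ((δ - 1) * x ^ (δ - 1 - 1))) x := by
    have ha := (((hasDerivAt_id' x).sub_const 1).pow 2).const_mul 3
    have hb := (Real.hasDerivAt_rpow_const (x := x) (p := δ - 1) (Or.inl hx0.ne')).const_mul δ
    have hc : HasDerivAt (fun y : ℝ => 3 * (y - 1) ^ 2 + δ * y ^ (δ - 1))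
        (6 * (x - 1) + δ * ((δ - 1) * x ^ (δ - 1 - 1))) x := by
      refine HasDerivAt.congr_deriv (ha.add hb) ?_
      norm_num
      ring
    refine hc.congr_of_eventuallyEq ?_
    filter_upwards [lt_mem_nhds hx0] with y hy
    exact (h1 y hy).deriv
  refine ⟨?_, ?_, ?_⟩
  · rw [h2.deriv, (h1 x hx0).deriv, hg x, Real.rpow_sub_one hx0.ne', Real.rpow_sub_one hx0.ne']
    field_simp
    ring
  · have hk : δ < x * (δ - 3) := (div_lt_iff₀ hd).1 hx
    have hq : (9/2) * x ^ 2 - (3/2) * x - δ ^ 2 / 2 * (x - 1) ^ 2 ≤ -(3/2) * x := by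
      nlinarith [mul_pos (show 0 < δ * (x - 1) - 3 * x by linarith)
        (show 0 < δ * (x - 1) + 3 * x by nlinarith)]
    have he : (9/2) * δ / (δ - 3) ^ 2 = (3/2) * (δ / (δ - 3)) * (δ / (δ - 3) - 1) := by
      field_simp
      ring
    rw [he]
    have := mul_le_mul_of_nonneg_left hq (show 0 ≤ x - 1 by linarith)
    nlinarith [mul_pos (sub_pos.2 hx) (show 0 < x + δ / (δ - 3) - 1 by linarith)]
  · have : 0 < (9/2) * δ / (δ - 3) ^ 2 := by positivity
    linarith
end

section
/- Let α < 0 < ρ and σ > 0. Then the equation (1/2)σ²β(β−1) + αβ = ρ has a unique negative root β₁, and it satisfies ρ/α < β₁ < 0. Moreover, for any c and L ≥ 0 with c > ρL, the threshold p* = (β₁/(β₁−1))·((ρ−α)/ρ)·(c−ρL) satisfies 0 < p* < c − ρL; in particular, the optimal abandonment price threshold is strictly below the production cost c. -/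
/-- For `α < 0 < ρ` and `σ > 0`, the equation `(1/2)σ²β(β−1) + αβ = ρ` has a unique
negative root `β₁`, which satisfies `ρ/α < β₁ < 0`; moreover for any `c` and `L ≥ 0` with
`c > ρL`, the abandonment threshold `p* = (β₁/(β₁−1))·((ρ−α)/ρ)·(c−ρL)` satisfies
`0 < p* < c − ρL` (in particular the optimal abandonment price threshold is strictly
below the production cost `c`). -/
theorem stmt_19 (α σ ρ : ℝ) (hα : α < 0) (hρ : 0 < ρ) (hσ : 0 < σ) :
    (∃! β : ℝ, β < 0 ∧ (1/2) * σ ^ 2 * β * (β - 1) + α * β = ρ) ∧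
    ∀ β₁ : ℝ, β₁ < 0 → (1/2) * σ ^ 2 * β₁ * (β₁ - 1) + α * β₁ = ρ →
      ρ / α < β₁ ∧
      ∀ c L : ℝ, 0 ≤ L → ρ * L < c →
        0 < β₁ / (β₁ - 1) * ((ρ - α) / ρ) * (c - ρ * L) ∧
        β₁ / (β₁ - 1) * ((ρ - α) / ρ) * (c - ρ * L) < c - ρ * L := by
  have hs : 0 < σ ^ 2 := by positivity
  refine ⟨?_, ?_⟩
  · have hneg : ρ / α < 0 := div_neg_of_pos_of_neg hρ hα
    have hcont : ContinuousOn (fun β : ℝ => (1/2) * σ ^ 2 * β * (β - 1) + α * β)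
        (Set.Icc (ρ / α) 0) := by fun_prop
    have hmem : ρ ∈ Set.Icc ((fun β : ℝ => (1/2) * σ ^ 2 * β * (β - 1) + α * β) 0)
        ((fun β : ℝ => (1/2) * σ ^ 2 * β * (β - 1) + α * β) (ρ / α)) := by
      refine ⟨by simpa using hρ.le, ?_⟩
      have h1 : α * (ρ / α) = ρ := by have := hα.ne; field_simp
      have h2 : 0 < (ρ / α) * (ρ / α - 1) := mul_pos_of_neg_of_neg hneg (by linarith)
      have h3 := mul_pos hs h2
      simp only
      rw [h1]
      nlinarith
    obtain ⟨x, hx, hfx⟩ := intermediate_value_Icc' hneg.le hcont hmem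
    simp only at hfx
    have hx0 : x < 0 := by
      rcases hx.2.lt_or_eq with h | h
      · exact h
      · subst h
        norm_num at hfx
        linarith
    refine ⟨x, ⟨hx0, hfx⟩, ?_⟩
    rintro y ⟨hy0, hy⟩
    have hz : (y - x) * ((1/2) * σ ^ 2 * (x + y - 1) + α) = 0 := by linear_combination hy - hfx
    rcases mul_eq_zero.mp hz with h | h
    · linarith
    · have := mul_pos hs (show 0 < -(x + y - 1) by linarith)
      nlinarith
  · intro b hb he
    have h2 : 0 < b * (b - 1) := mul_pos_of_neg_of_neg hb (by linarith)
    have h3 := mul_pos hs h2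
    have h4 : α * b < ρ := by nlinarith
    refine ⟨by rw [div_lt_iff_of_neg hα]; linarith, ?_⟩
    intro c L _ hc
    have hcL : 0 < c - ρ * L := by linarith
    have hq : 0 < b / (b - 1) := div_pos_of_neg_of_neg hb (by linarith)
    have hr : 0 < (ρ - α) / ρ := div_pos (by linarith) hρ
    refine ⟨by positivity, ?_⟩
    have hlt : b / (b - 1) * ((ρ - α) / ρ) < 1 := by
      rw [div_mul_div_comm, div_lt_one_of_neg (mul_neg_of_neg_of_pos (by linarith) hρ)]
      nlinarith
    exact mul_lt_of_lt_one_left hcL hlt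
end
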